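/- Let v be a norm on ℝ^n invariant under coordinate permutations with dual norm v*, and let f : P_n → ℝ be a differentiable function that is geodesically convex (t ↦ f(X^{1/2} e^{tS} X^{1/2}) is convex for every X ∈ P_n and Hermitian S). For Hermitian H, define the recession function f^∞(H) := lim_{t→∞} (f(e^{tH}) − f(I))/t ∈ ℝ ∪ {+∞} (the limit exists by convexity). Then inf_{X ∈ P_n} ‖X^{1/2} ∇f(X) X^{1/2}‖_{v*} = sup { −f^∞(H) : H Hermitian, ‖H‖_v ≤ 1 }, where ∇f(X) is the Hermitian matrix representing the differential of f at X via the trace pairing. -/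

import Mathlib

noncomputable section
open scoped Classical
open Matrix Filter
open scoped ComplexOrder Topology

/-- `v(λ(H))` for Hermitian `H` (junk value `0` otherwise). -/
def vnorm {n : ℕ} (v : (Fin n → ℝ) → ℝ) (H : Matrix (Fin n) (Fin n) ℂ) : ℝ :=
  if h : H.IsHermitian then v h.eigenvalues else 0

/-- The positive semidefinite square root (junk value `0` off PSD matrices). -/
def matSqrt {n : ℕ} (X : Matrix (Fin n) (Fin n) ℂ) : Matrix (Fin n) (Fin n) ℂ :=
  if h : X.PosSemidef then
    h.1.eigenvectorUnitary.1 * diagonal ((↑) ∘ Real.sqrt ∘ h.1.eigenvalues) *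
      (star h.1.eigenvectorUnitary : Matrix (Fin n) (Fin n) ℂ)
  else 0

/-!
The gradient of `f` is used only through the subgradient inequality along geodesics,
`f (A Aᴴ) + re tr (Aᴴ ∇f(A Aᴴ) A S) ≤ f (A e^S Aᴴ)`, where the trace is at least
`-‖Aᴴ ∇f(A Aᴴ) A‖_{v*} ‖S‖_v` by trace duality. If `A e^L Aᴴ = e^{tH}`, then Lidskii's inequality
bounds `‖L‖_v` by `t ‖H‖_v` up to a constant; dividing by `t → ∞` gives `≥`.

Conversely, let `m` be smaller than all gradient norms. A minimizer of `f (e^K) + m ‖K‖_v` on the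
ball `‖K‖_v ≤ R` cannot be interior, since it would be a point with gradient norm at most `m`; so
`f (e^K) ≤ f I - m R` for some `K` with `‖K‖_v = R`. Compactness of the unit ball of directions
`K / R` gives a single direction along which `f` descends at rate `m` forever.
-/

section Spectral

variable {ι : Type*} [Fintype ι] [DecidableEq ι]

/-- The matrix `U diag(h) U*`, as a star algebra homomorphism in the real vector `h`: it turns the
coordinatewise calculus of `h` into the functional calculus of a Hermitian matrix with eigenvalue
vector `h`. -/
def unitaryDiagonal (U : unitaryGroup ι ℂ) : (ι → ℝ) →⋆ₐ[ℝ] Matrix ι ι ℂ where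
  toFun h := Unitary.conjStarAlgAut ℂ _ U (diagonal fun i => (h i : ℂ))
  map_one' := by simp
  map_zero' := by simp
  map_mul' a b := by simp only [← map_mul, diagonal_mul_diagonal, Pi.mul_apply, Complex.ofReal_mul]
  map_add' a b := by simp only [← map_add, diagonal_add, Pi.add_apply, Complex.ofReal_add]
  commutes' r := by
    have h : diagonal (fun _ : ι => (r : ℂ)) = r • (1 : Matrix ι ι ℂ) := by
      rw [← diagonal_one, ← diagonal_smul]
      congr 1
      ext i
      simp
    simp [h, Algebra.algebraMap_eq_smul_one]
  map_star' a := by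
    rw [← map_star, star_eq_conjTranspose, diagonal_conjTranspose]
    congr 2
    ext i
    simp

variable (U W : unitaryGroup ι ℂ)

theorem unitaryDiagonal_apply (h : ι → ℝ) :
    unitaryDiagonal U h =
      (U : Matrix ι ι ℂ) * diagonal (fun i => (h i : ℂ)) * (U : Matrix ι ι ℂ)ᴴ :=
  rfl

theorem isHermitian_unitaryDiagonal (h : ι → ℝ) : (unitaryDiagonal U h).IsHermitian :=
  (IsSelfAdjoint.all h).map (unitaryDiagonal U)

theorem charpoly_unitaryDiagonal (h : ι → ℝ) :
    (unitaryDiagonal U h).charpoly = ∏ i, (Polynomial.X - Polynomial.C (h i : ℂ)) := by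
  rw [unitaryDiagonal_apply, charpoly_mul_comm, ← mul_assoc, ← star_eq_conjTranspose,
    UnitaryGroup.star_mul_self, one_mul, charpoly_diagonal]

theorem det_unitaryDiagonal (h : ι → ℝ) : (unitaryDiagonal U h).det = ((∏ i, h i : ℝ) : ℂ) := by
  rw [unitaryDiagonal_apply, det_mul_comm, ← mul_assoc, ← star_eq_conjTranspose,
    UnitaryGroup.star_mul_self, one_mul, det_diagonal, Complex.ofReal_prod]

theorem exp_unitaryDiagonal (h : ι → ℝ) :
    NormedSpace.exp (unitaryDiagonal U h) = unitaryDiagonal U fun i => Real.exp (h i) := by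
  have hU : (U : Matrix ι ι ℂ)⁻¹ = (U : Matrix ι ι ℂ)ᴴ :=
    inv_eq_left_inv (UnitaryGroup.star_mul_self U)
  rw [unitaryDiagonal_apply, ← hU, Matrix.exp_conj _ _ Unitary.isUnit_coe, Matrix.exp_diagonal, hU]
  congr 3
  ext i
  simp [← Complex.exp_eq_exp_ℂ]

theorem dotProduct_unitaryDiagonal_mulVec (h : ι → ℝ) (x : ι → ℂ) :
    star x ⬝ᵥ unitaryDiagonal U h *ᵥ x =
      ((∑ i, h i * ‖((U : Matrix ι ι ℂ)ᴴ *ᵥ x) i‖ ^ 2 : ℝ) : ℂ) := by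
  have hx : star x ᵥ* (U : Matrix ι ι ℂ) = star ((U : Matrix ι ι ℂ)ᴴ *ᵥ x) := by
    rw [star_mulVec, conjTranspose_conjTranspose]
  rw [unitaryDiagonal_apply, ← mulVec_mulVec, ← mulVec_mulVec, dotProduct_mulVec, hx]
  simp only [dotProduct, mulVec_diagonal, Pi.star_apply, RCLike.star_def, Complex.ofReal_sum,
    Complex.ofReal_mul, Complex.ofReal_pow, ← Complex.conj_mul']
  exact Finset.sum_congr rfl fun i _ => by ring

theorem posSemidef_unitaryDiagonal {h : ι → ℝ} (hh : 0 ≤ h) : (unitaryDiagonal U h).PosSemidef :=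
  (PosSemidef.diagonal fun i => by simpa using hh i).mul_mul_conjTranspose_same _

theorem posDef_unitaryDiagonal_iff {h : ι → ℝ} :
    (unitaryDiagonal U h).PosDef ↔ ∀ i, 0 < h i := by
  rw [unitaryDiagonal_apply, ← star_eq_conjTranspose,
    IsUnit.posDef_star_right_conjugate_iff Unitary.isUnit_coe]
  simp

theorem exists_eq_unitaryDiagonal_antitone {n : ℕ} {H : Matrix (Fin n) (Fin n) ℂ}
    (hH : H.IsHermitian) : ∃ U h, Antitone h ∧ H = unitaryDiagonal U h := by
  let σ := Tuple.sort (OrderDual.toDual ∘ hH.eigenvalues)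
  let V : Matrix (Fin n) (Fin n) ℂ := hH.eigenvectorUnitary
  have hU : V.submatrix id σ ∈ unitaryGroup (Fin n) ℂ := by
    rw [mem_unitaryGroup_iff', star_eq_conjTranspose, conjTranspose_submatrix]
    refine (submatrix_mul_equiv Vᴴ V σ (Equiv.refl _) σ).trans ?_
    rw [← star_eq_conjTranspose, UnitaryGroup.star_mul_self, submatrix_one_equiv]
  refine ⟨⟨_, hU⟩, hH.eigenvalues ∘ σ, Tuple.monotone_sort (OrderDual.toDual ∘ hH.eigenvalues), ?_⟩
  have hd : diagonal (fun i => ((hH.eigenvalues ∘ σ) i : ℂ)) =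
      (diagonal fun i => (hH.eigenvalues i : ℂ)).submatrix σ σ :=
    (submatrix_diagonal_equiv (fun i => (hH.eigenvalues i : ℂ)) σ).symm
  rw [unitaryDiagonal_apply, hd, conjTranspose_submatrix, submatrix_mul_equiv, submatrix_mul_equiv,
    submatrix_id_id]
  exact hH.spectral_theorem

theorem exists_eq_exp_unitaryDiagonal_antitone {n : ℕ} {P : Matrix (Fin n) (Fin n) ℂ}
    (hP : P.PosDef) : ∃ U h, Antitone h ∧ P = NormedSpace.exp (unitaryDiagonal U h) := by
  obtain ⟨U, h, hh, rfl⟩ := exists_eq_unitaryDiagonal_antitone hP.isHermitian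
  have hpos := (posDef_unitaryDiagonal_iff U).1 hP
  refine ⟨U, fun i => Real.log (h i), fun i j hij => Real.log_le_log (hpos j) (hh hij), ?_⟩
  simp only [exp_unitaryDiagonal, Real.exp_log (hpos _)]

theorem posDef_exp_unitaryDiagonal (h : ι → ℝ) :
    (NormedSpace.exp (unitaryDiagonal U h)).PosDef := by
  rw [exp_unitaryDiagonal]
  exact (posDef_unitaryDiagonal_iff U).2 fun i => Real.exp_pos _

theorem posDef_exp {n : ℕ} {H : Matrix (Fin n) (Fin n) ℂ} (hH : H.IsHermitian) :
    (NormedSpace.exp H).PosDef := by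
  obtain ⟨U, h, -, rfl⟩ := exists_eq_unitaryDiagonal_antitone hH
  exact posDef_exp_unitaryDiagonal U h

theorem matSqrt_eq_unitaryDiagonal {n : ℕ} {X : Matrix (Fin n) (Fin n) ℂ} (hX : X.PosSemidef) :
    matSqrt X = unitaryDiagonal hX.isHermitian.eigenvectorUnitary
      fun i => √(hX.isHermitian.eigenvalues i) :=
  dif_pos hX

theorem posDef_matSqrt {n : ℕ} {X : Matrix (Fin n) (Fin n) ℂ} (hX : X.PosDef) :
    (matSqrt X).PosDef := by
  rw [matSqrt_eq_unitaryDiagonal hX.posSemidef, posDef_unitaryDiagonal_iff]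
  exact fun i => Real.sqrt_pos.2 (hX.eigenvalues_pos i)

theorem matSqrt_mul_self {n : ℕ} {X : Matrix (Fin n) (Fin n) ℂ} (hX : X.PosSemidef) :
    matSqrt X * matSqrt X = X := by
  rw [matSqrt_eq_unitaryDiagonal hX, ← map_mul]
  conv_rhs => rw [hX.isHermitian.spectral_theorem]
  have h : (fun i => √(hX.isHermitian.eigenvalues i)) * (fun i => √(hX.isHermitian.eigenvalues i)) =
      hX.isHermitian.eigenvalues := funext fun i => Real.mul_self_sqrt (hX.eigenvalues_nonneg i)
  rw [h]
  rfl

theorem sum_norm_sq_conjTranspose_mulVec (x : ι → ℂ) :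
    ∑ i, ‖((U : Matrix ι ι ℂ)ᴴ *ᵥ x) i‖ ^ 2 = ∑ i, ‖x i‖ ^ 2 := by
  have h := dotProduct_unitaryDiagonal_mulVec U 1 x
  have h' : star x ⬝ᵥ x = ((∑ i, ‖x i‖ ^ 2 : ℝ) : ℂ) := by
    simp [dotProduct, Complex.conj_mul']
  rw [map_one, one_mulVec, h', Complex.ofReal_inj] at h
  simpa using h.symm

end Spectral

section Invariant

variable {ι : Type*}

/-- A function on `ℝ^ι` that does not depend on the order of the coordinates. -/
def IsPermInvariant (v : (ι → ℝ) → ℝ) : Prop :=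
  ∀ (σ : Equiv.Perm ι) (x : ι → ℝ), v (x ∘ σ) = v x

theorem exists_perm_eq_comp_of_map_univ_eq {n : ℕ} {x y : Fin n → ℝ}
    (h : Finset.univ.val.map x = Finset.univ.val.map y) : ∃ σ : Equiv.Perm (Fin n), x = y ∘ σ := by
  rw [Fin.univ_val_map, Fin.univ_val_map, Multiset.coe_eq_coe] at h
  have hsort : x ∘ Tuple.sort x = y ∘ Tuple.sort y :=
    List.ofFn_injective <|
      ((Equiv.Perm.ofFn_comp_perm _ _).trans <| h.trans
        (Equiv.Perm.ofFn_comp_perm _ _).symm).eq_of_sortedLE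
      (Tuple.monotone_sort x).sortedLE_ofFn (Tuple.monotone_sort y).sortedLE_ofFn
  refine ⟨(Tuple.sort x).symm.trans (Tuple.sort y), funext fun i => ?_⟩
  simpa using congrFun hsort ((Tuple.sort x).symm i)

theorem vnorm_unitaryDiagonal {n : ℕ} {v : (Fin n → ℝ) → ℝ} (hv : IsPermInvariant v)
    (U : unitaryGroup (Fin n) ℂ) (h : Fin n → ℝ) : vnorm v (unitaryDiagonal U h) = v h := by
  have hH := isHermitian_unitaryDiagonal U h
  have hroots := hH.roots_charpoly_eq_eigenvalues
  rw [charpoly_unitaryDiagonal, Polynomial.roots_prod _ _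
    (by simp [Finset.prod_ne_zero_iff, Polynomial.X_sub_C_ne_zero])] at hroots
  simp only [Polynomial.roots_X_sub_C, Multiset.bind_singleton] at hroots
  obtain ⟨σ, hσ⟩ : ∃ σ : Equiv.Perm (Fin n), h = hH.eigenvalues ∘ σ :=
    exists_perm_eq_comp_of_map_univ_eq <| by
      simpa [Function.comp_def] using congrArg (Multiset.map Complex.re) hroots
  rw [vnorm, dif_pos hH, ← hv σ, ← hσ]

theorem vnorm_smul {n : ℕ} {p : Seminorm ℝ (Fin n → ℝ)} (hp : IsPermInvariant p)
    {H : Matrix (Fin n) (Fin n) ℂ} (hH : H.IsHermitian) (t : ℝ) :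
    vnorm p (t • H) = |t| * vnorm p H := by
  obtain ⟨U, h, -, rfl⟩ := exists_eq_unitaryDiagonal_antitone hH
  rw [← map_smul, vnorm_unitaryDiagonal hp, vnorm_unitaryDiagonal hp, map_smul_eq_mul,
    Real.norm_eq_abs]

theorem vnorm_zero {n : ℕ} {p : Seminorm ℝ (Fin n → ℝ)} (hp : IsPermInvariant p) :
    vnorm p 0 = 0 := by
  simpa using vnorm_smul hp isHermitian_zero 0

end Invariant

section Weyl

open scoped MatrixOrder

variable {ι : Type*} [Fintype ι]

theorem monotone_unitaryDiagonal [DecidableEq ι] (U : unitaryGroup ι ℂ) :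
    Monotone (unitaryDiagonal U) := fun a b hab => by
  rw [le_iff, ← map_sub]
  exact posSemidef_unitaryDiagonal U (sub_nonneg.2 hab)

variable [LinearOrder ι] (U W : unitaryGroup ι ℂ)

theorem exists_ne_zero_forall_lt_mulVec_eq_zero (A B : Matrix ι ι ℂ) (i : ι) :
    ∃ x ≠ 0, (∀ j, i < j → (A *ᵥ x) j = 0) ∧ ∀ j, j < i → (B *ᵥ x) j = 0 := by
  let T : (ι → ℂ) →ₗ[ℂ] (ι → ℂ) := LinearMap.pi fun j =>
    if i < j then (LinearMap.proj j).comp A.mulVecLin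
    else if j < i then (LinearMap.proj j).comp B.mulVecLin else 0
  have hT : ¬ Function.Injective T := by
    rw [LinearMap.injective_iff_surjective]
    intro hsurj
    obtain ⟨x, hx⟩ := hsurj 1
    simpa [T] using congrFun hx i
  rw [injective_iff_map_eq_zero] at hT
  push Not at hT
  obtain ⟨x, hx, hx0⟩ := hT
  refine ⟨x, hx0, fun j hj => ?_, fun j hj => ?_⟩
  · simpa [T, hj] using congrFun hx j
  · simpa [T, hj, hj.not_gt] using congrFun hx j

/-- Some nonzero vector is orthogonal to the columns of `U` after the `i`-th and to those of `W`
before the `i`-th, as these number `n - 1`; its two Rayleigh quotients are separated by `a i` and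
`b i`. -/
theorem le_of_unitaryDiagonal_le_unitaryDiagonal {a b : ι → ℝ} (ha : Antitone a) (hb : Antitone b)
    (h : unitaryDiagonal U a ≤ unitaryDiagonal W b) : a ≤ b := by
  intro i
  obtain ⟨x, hx0, hxU, hxW⟩ := exists_ne_zero_forall_lt_mulVec_eq_zero
    (U : Matrix ι ι ℂ)ᴴ (W : Matrix ι ι ℂ)ᴴ i
  have hquad := (le_iff.1 h).dotProduct_mulVec_nonneg x
  rw [sub_mulVec, dotProduct_sub, dotProduct_unitaryDiagonal_mulVec,
    dotProduct_unitaryDiagonal_mulVec, ← Complex.ofReal_sub, Complex.zero_le_real,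
    sub_nonneg] at hquad
  have hlow : a i * ∑ j, ‖x j‖ ^ 2 ≤ ∑ j, a j * ‖((U : Matrix ι ι ℂ)ᴴ *ᵥ x) j‖ ^ 2 := by
    rw [← sum_norm_sq_conjTranspose_mulVec U, Finset.mul_sum]
    refine Finset.sum_le_sum fun j _ => ?_
    rcases lt_or_ge i j with hj | hj
    · simp [hxU j hj]
    · exact mul_le_mul_of_nonneg_right (ha hj) (by positivity)
  have hupp : ∑ j, b j * ‖((W : Matrix ι ι ℂ)ᴴ *ᵥ x) j‖ ^ 2 ≤ b i * ∑ j, ‖x j‖ ^ 2 := by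
    rw [← sum_norm_sq_conjTranspose_mulVec W, Finset.mul_sum]
    refine Finset.sum_le_sum fun j _ => ?_
    rcases lt_or_ge j i with hj | hj
    · simp [hxW j hj]
    · exact mul_le_mul_of_nonneg_right (hb hj) (by positivity)
  have hpos : 0 < ∑ j, ‖x j‖ ^ 2 := by
    obtain ⟨j, hj⟩ := Function.ne_iff.1 hx0
    exact Finset.sum_pos' (fun _ _ => by positivity)
      ⟨j, Finset.mem_univ _, pow_pos (norm_pos_iff.2 hj) 2⟩
  exact le_of_mul_le_mul_right (hlow.trans (hquad.trans hupp)) hpos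

theorem le_of_exp_unitaryDiagonal_le_exp_unitaryDiagonal {a b : ι → ℝ} (ha : Antitone a)
    (hb : Antitone b) (h : NormedSpace.exp (unitaryDiagonal U a) ≤
      NormedSpace.exp (unitaryDiagonal W b)) : a ≤ b := by
  rw [exp_unitaryDiagonal, exp_unitaryDiagonal] at h
  exact fun i => Real.exp_le_exp.1 <| le_of_unitaryDiagonal_le_unitaryDiagonal U W
    (Real.exp_monotone.comp_antitone ha) (Real.exp_monotone.comp_antitone hb) h i

end Weyl

section Lidskii

open scoped MatrixOrder

variable {n : ℕ} {A : Matrix (Fin n) (Fin n) ℂ} {U W V : unitaryGroup (Fin n) ℂ}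
  {x y z : Fin n → ℝ}

theorem congruence_exp_unitaryDiagonal_const (W : unitaryGroup (Fin n) ℂ) (τ : ℝ)
    (hA : A * Aᴴ = NormedSpace.exp (unitaryDiagonal U y)) :
    A * NormedSpace.exp (unitaryDiagonal W fun _ => τ) * Aᴴ =
      NormedSpace.exp (unitaryDiagonal U fun i => y i + τ) := by
  have hconst : (fun _ => Real.exp τ) = Real.exp τ • (1 : Fin n → ℝ) := by
    ext i
    simp
  have hadd : (fun i => Real.exp (y i + τ)) = Real.exp τ • fun i => Real.exp (y i) := by
    ext i
    simp [Real.exp_add, mul_comm]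
  rw [exp_unitaryDiagonal, exp_unitaryDiagonal, hconst, hadd, map_smul, map_smul, map_one,
    mul_smul_comm, mul_one, smul_mul_assoc, hA, exp_unitaryDiagonal]

theorem isUnit_of_mul_conjTranspose_eq_exp (hA : A * Aᴴ = NormedSpace.exp (unitaryDiagonal U y)) :
    IsUnit A := by
  have hdet : IsUnit (A * Aᴴ).det :=
    (isUnit_iff_isUnit_det _).1 (hA ▸ (posDef_exp_unitaryDiagonal U y).isUnit)
  rw [det_mul] at hdet
  exact (isUnit_iff_isUnit_det A).2 (isUnit_of_mul_isUnit_left hdet)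

theorem sum_log_eigenvalues_congruence (hA : A * Aᴴ = NormedSpace.exp (unitaryDiagonal U y))
    (hx : A * NormedSpace.exp (unitaryDiagonal W z) * Aᴴ = NormedSpace.exp (unitaryDiagonal V x)) :
    ∑ i, x i = ∑ i, y i + ∑ i, z i := by
  have hdet : (A * Aᴴ).det * (NormedSpace.exp (unitaryDiagonal W z)).det =
      (NormedSpace.exp (unitaryDiagonal V x)).det := by
    rw [← hx, det_mul, det_mul, det_mul]
    ring
  simp only [hA, exp_unitaryDiagonal, det_unitaryDiagonal, ← Real.exp_sum, ← Complex.ofReal_mul,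
    ← Real.exp_add, Complex.ofReal_inj, Real.exp_eq_exp] at hdet
  exact hdet.symm

theorem monotone_congruence_exp_unitaryDiagonal (A : Matrix (Fin n) (Fin n) ℂ)
    (W : unitaryGroup (Fin n) ℂ) :
    Monotone fun h => A * NormedSpace.exp (unitaryDiagonal W h) * Aᴴ := fun a b hab => by
  simp only [exp_unitaryDiagonal]
  exact star_right_conjugate_le_conjugate
    (monotone_unitaryDiagonal W fun i => Real.exp_le_exp.2 (hab i)) A

/-- Replacing `z` by `max z τ` only increases `x`, to some `x'` with `y + τ ≤ x'`; hence the sum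
over `I` of the nonnegative numbers `x' - y - τ` is at most their sum over all indices, which the
determinant computes. -/
theorem sum_log_eigenvalues_congruence_sub_le (hxa : Antitone x) (hya : Antitone y)
    (hA : A * Aᴴ = NormedSpace.exp (unitaryDiagonal U y))
    (hx : A * NormedSpace.exp (unitaryDiagonal W z) * Aᴴ = NormedSpace.exp (unitaryDiagonal V x))
    (I : Finset (Fin n)) (τ : ℝ) :
    ∑ i ∈ I, (x i - y i) ≤ ∑ i, max (z i - τ) 0 + I.card * τ := by
  obtain ⟨V', x', hx'a, hx'⟩ := exists_eq_exp_unitaryDiagonal_antitone <|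
    (isUnit_of_mul_conjTranspose_eq_exp hA).posDef_star_right_conjugate_iff.2
      (posDef_exp_unitaryDiagonal W fun i => max (z i) τ)
  rw [star_eq_conjTranspose] at hx'
  have hxx' : x ≤ x' := by
    refine le_of_exp_unitaryDiagonal_le_exp_unitaryDiagonal V V' hxa hx'a ?_
    rw [← hx, ← hx']
    exact monotone_congruence_exp_unitaryDiagonal A W fun i => le_max_left _ _
  have hyx' : (fun i => y i + τ) ≤ x' := by
    refine le_of_exp_unitaryDiagonal_le_exp_unitaryDiagonal U V' (hya.add_const τ) hx'a ?_
    rw [← congruence_exp_unitaryDiagonal_const W τ hA, ← hx']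
    exact monotone_congruence_exp_unitaryDiagonal A W fun i => le_max_right _ _
  have hsum := sum_log_eigenvalues_congruence hA hx'
  calc ∑ i ∈ I, (x i - y i) ≤ ∑ i ∈ I, ((x' i - y i - τ) + τ) :=
        Finset.sum_le_sum fun i _ => by linarith [hxx' i]
    _ = ∑ i ∈ I, (x' i - y i - τ) + I.card * τ := by simp
    _ ≤ ∑ i, (x' i - y i - τ) + I.card * τ := by
        gcongr
        · exact fun i _ _ => by linarith [hyx' i]
        · exact Finset.subset_univ _
    _ = ∑ i, max (z i - τ) 0 + I.card * τ := by
        have hmax : ∀ i, max (z i - τ) 0 = max (z i) τ - τ := fun i => by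
          rw [← max_sub_sub_right, sub_self]
        simp only [hmax, Finset.sum_sub_distrib, hsum]
        ring

end Lidskii

section Majorization

variable {ι : Type*}

theorem mul_sum_le_sum_mul_of_antitoneOn [LinearOrder ι] (s : Finset ι) {b e : ι → ℝ}
    (hb : AntitoneOn b s) (he : ∀ k ∈ s, 0 ≤ ∑ i ∈ s with i ≤ k, e i) {c : ℝ}
    (hc : ∀ i ∈ s, c ≤ b i) : c * ∑ i ∈ s, e i ≤ ∑ i ∈ s, b i * e i := by
  induction s using Finset.induction_on_max generalizing c with
  | empty => simp
  | insert a s hlt ih =>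
    have ha : a ∉ s := fun h => (hlt a h).false
    have hprefix : ∀ k ∈ s, (insert a s).filter (· ≤ k) = s.filter (· ≤ k) := fun k hk => by
      rw [Finset.filter_insert, if_neg (hlt k hk).not_ge]
    have hs : b a * ∑ i ∈ s, e i ≤ ∑ i ∈ s, b i * e i :=
      ih (hb.mono (by simp))
        (fun k hk => hprefix k hk ▸ he k (Finset.mem_insert_of_mem hk))
        fun i hi => hb (by simp [hi]) (by simp) (hlt i hi).le
    have htotal : 0 ≤ ∑ i ∈ insert a s, e i := by
      have hall : (insert a s).filter (· ≤ a) = insert a s :=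
        Finset.filter_true_of_mem fun i hi =>
          (Finset.mem_insert.1 hi).elim le_of_eq fun h => (hlt i h).le
      exact hall ▸ he a (Finset.mem_insert_self a s)
    calc c * ∑ i ∈ insert a s, e i ≤ b a * ∑ i ∈ insert a s, e i :=
          mul_le_mul_of_nonneg_right (hc a (Finset.mem_insert_self a s)) htotal
      _ = b a * e a + b a * ∑ i ∈ s, e i := by rw [Finset.sum_insert ha, mul_add]
      _ ≤ ∑ i ∈ insert a s, b i * e i := by
          rw [Finset.sum_insert ha]
          gcongr

theorem sum_max_sub_add_card_mul_eq_sum_Iic [Fintype ι] [LinearOrder ι] [LocallyFiniteOrderBot ι]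
    {z : ι → ℝ} (hz : Antitone z) (k : ι) :
    ∑ i, max (z i - z k) 0 + (Finset.Iic k).card * z k = ∑ i ∈ Finset.Iic k, z i := by
  have hmax : ∑ i, max (z i - z k) 0 = ∑ i ∈ Finset.Iic k, (z i - z k) := by
    rw [← Finset.sum_subset (Finset.subset_univ (Finset.Iic k))]
    · exact Finset.sum_congr rfl fun i hi =>
        max_eq_left (sub_nonneg.2 (hz (Finset.mem_Iic.1 hi)))
    · exact fun i _ hi =>
        max_eq_right (sub_nonpos.2 (hz (not_le.1 (Finset.mem_Iic.not.1 hi)).le))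
  rw [hmax, Finset.sum_sub_distrib, Finset.sum_const, nsmul_eq_mul, sub_add_cancel]

theorem exists_dotProduct_eq_forall_dotProduct_le [Fintype ι] (p : Seminorm ℝ (ι → ℝ))
    (x : ι → ℝ) :
    ∃ b : ι → ℝ, b ⬝ᵥ x = p x ∧ ∀ y, b ⬝ᵥ y ≤ p y := by
  rcases eq_or_ne x 0 with rfl | hx
  · exact ⟨0, by simp, fun y => by simp⟩
  let g : (ι → ℝ) →ₗ.[ℝ] ℝ := LinearPMap.mkSpanSingleton x (p x) hx
  have hg : ∀ y, g.toFun y ≤ p y := by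
    rintro ⟨y, hy⟩
    obtain ⟨c, rfl⟩ := Submodule.mem_span_singleton.1 hy
    have hc : g ⟨c • x, hy⟩ = c • p x := LinearPMap.mkSpanSingleton'_apply x (p x) _ c hy
    calc g ⟨c • x, hy⟩ = c * p x := hc
      _ ≤ ‖c‖ * p x := mul_le_mul_of_nonneg_right (Real.le_norm_self c) (apply_nonneg p x)
      _ = p (c • x) := (map_smul_eq_mul p c x).symm
  obtain ⟨φ, hφ, hφp⟩ := Module.Dual.exists_extension_of_le_seminorm_real _ g.toFun hg
  have hdual : ∀ y, (dotProductEquiv ℝ ι).symm φ ⬝ᵥ y = φ y := fun y =>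
    LinearMap.congr_fun ((dotProductEquiv ℝ ι).apply_symm_apply φ) y
  refine ⟨(dotProductEquiv ℝ ι).symm φ, ?_, fun y => ?_⟩
  · rw [hdual]
    exact (hφ ⟨x, Submodule.mem_span_singleton_self x⟩).trans
      (LinearPMap.mkSpanSingleton_apply ℝ ℝ hx (p x))
  · rw [hdual]
    exact (le_abs_self _).trans (hφp y)

theorem seminorm_le_of_forall_sum_le {n : ℕ} {p : Seminorm ℝ (Fin n → ℝ)}
    (hp : IsPermInvariant p) {d z : Fin n → ℝ} (hz : Antitone z)
    (hsub : ∀ (I : Finset (Fin n)) (τ : ℝ),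
      ∑ i ∈ I, d i ≤ ∑ i, max (z i - τ) 0 + I.card * τ)
    (hsum : ∑ i, d i = ∑ i, z i) : p d ≤ p z := by
  obtain ⟨b, hbd, hb⟩ := exists_dotProduct_eq_forall_dotProduct_le p d
  let σ := Tuple.sort (OrderDual.toDual ∘ b)
  have hbσ : Antitone (b ∘ σ) := Tuple.monotone_sort (OrderDual.toDual ∘ b)
  have hpartial : ∀ k, 0 ≤ ∑ i with i ≤ k, (z i - d (σ i)) := fun k => by
    have hk := hsub ((Finset.Iic k).map σ.toEmbedding) (z k)
    rw [Finset.card_map, sum_max_sub_add_card_mul_eq_sum_Iic hz k, Finset.sum_map] at hk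
    rw [Finset.filter_ge_eq_Iic, Finset.sum_sub_distrib]
    exact sub_nonneg.2 hk
  have htotal : ∑ i, (z i - d (σ i)) = 0 := by
    rw [Finset.sum_sub_distrib, Equiv.sum_comp σ d, hsum, sub_self]
  have habel : 0 ≤ ∑ i, b (σ i) * (z i - d (σ i)) := by
    obtain ⟨c, hc⟩ := (Set.finite_range b).bddBelow
    simpa [htotal] using mul_sum_le_sum_mul_of_antitoneOn Finset.univ (hbσ.antitoneOn _)
      (fun k _ => hpartial k) fun i _ => hc ⟨σ i, rfl⟩
  calc p d = ∑ i, b (σ i) * d (σ i) := by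
        rw [← hbd, dotProduct, Equiv.sum_comp σ fun i => b i * d i]
    _ ≤ ∑ i, b (σ i) * z i := by
        simpa only [mul_sub, Finset.sum_sub_distrib, sub_nonneg] using habel
    _ = b ⬝ᵥ (z ∘ σ.symm) := by
        simp [dotProduct, ← Equiv.sum_comp σ fun i => b i * z (σ.symm i)]
    _ ≤ p (z ∘ σ.symm) := hb _
    _ = p z := hp _ _

theorem vnorm_le_add_of_congruence {n : ℕ} {p : Seminorm ℝ (Fin n → ℝ)} (hp : IsPermInvariant p)
    {A K Z L : Matrix (Fin n) (Fin n) ℂ} (hK : K.IsHermitian) (hZ : Z.IsHermitian)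
    (hL : L.IsHermitian) (hA : A * Aᴴ = NormedSpace.exp K)
    (hAZ : A * NormedSpace.exp Z * Aᴴ = NormedSpace.exp L) :
    vnorm p L ≤ vnorm p K + vnorm p Z := by
  obtain ⟨U, y, hy, rfl⟩ := exists_eq_unitaryDiagonal_antitone hK
  obtain ⟨W, z, hz, rfl⟩ := exists_eq_unitaryDiagonal_antitone hZ
  obtain ⟨V, x, hx, rfl⟩ := exists_eq_unitaryDiagonal_antitone hL
  simp only [vnorm_unitaryDiagonal hp]
  have hxy : p (x - y) ≤ p z :=
    seminorm_le_of_forall_sum_le hp hz (sum_log_eigenvalues_congruence_sub_le hx hy hA hAZ) <| by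
      simp [sum_log_eigenvalues_congruence hA hAZ]
  calc p x = p (y + (x - y)) := by rw [add_sub_cancel]
    _ ≤ p y + p (x - y) := map_add_le_add p _ _
    _ ≤ p y + p z := by gcongr

end Majorization

section Duality

variable {ι : Type*}

theorem continuous_seminorm [Finite ι] (p : Seminorm ℝ (ι → ℝ)) : Continuous p := by
  have := Fintype.ofFinite ι
  simpa [interior_univ, continuousOn_univ] using p.convexOn.continuousOn_interior

variable [Fintype ι]

theorem seminorm_mulVec_le_of_mem_doublyStochastic [DecidableEq ι] {p : Seminorm ℝ (ι → ℝ)}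
    (hp : IsPermInvariant p) {M : Matrix ι ι ℝ} (hM : M ∈ doublyStochastic ℝ ι) (x : ι → ℝ) :
    p (M *ᵥ x) ≤ p x := by
  obtain ⟨w, hw0, hw1, rfl⟩ := exists_eq_sum_perm_of_mem_doublyStochastic hM
  have hterm : ∀ σ : Equiv.Perm ι, p ((w σ • σ.permMatrix ℝ) *ᵥ x) = w σ * p x := fun σ => by
    rw [smul_mulVec, map_smul_eq_mul, Real.norm_of_nonneg (hw0 σ), Equiv.Perm.permMatrix,
      PEquiv.toMatrix_toPEquiv_mulVec, hp σ]
  calc p ((∑ σ, w σ • σ.permMatrix ℝ) *ᵥ x)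
      ≤ ∑ σ, p ((w σ • σ.permMatrix ℝ) *ᵥ x) := by
        rw [sum_mulVec]
        exact Finset.le_sum_of_subadditive p (map_zero p).le (map_add_le_add p) _ _
    _ = p x := by simp only [hterm, ← Finset.sum_mul, hw1, one_mul]

theorem of_norm_sq_mem_doublyStochastic [DecidableEq ι] (V : unitaryGroup ι ℂ) :
    (of fun i j => ‖(V : Matrix ι ι ℂ) i j‖ ^ 2) ∈ doublyStochastic ℝ ι := by
  rw [mem_doublyStochastic_iff_sum]
  refine ⟨fun i j => by simp, fun i => ?_, fun j => ?_⟩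
  · have h := congrFun (congrFun (mem_unitaryGroup_iff.1 V.2) i) i
    simp only [mul_apply, star_eq_conjTranspose, conjTranspose_apply, RCLike.star_def,
      Complex.mul_conj', one_apply_eq] at h
    exact_mod_cast h
  · have h := congrFun (congrFun (mem_unitaryGroup_iff'.1 V.2) j) j
    simp only [mul_apply, star_eq_conjTranspose, conjTranspose_apply, RCLike.star_def,
      Complex.conj_mul', one_apply_eq] at h
    exact_mod_cast h

/-- `q` is the dual norm of `p`, i.e. `q x = max {x ⬝ y | p y ≤ 1}`. -/
def IsDualNorm (p q : (ι → ℝ) → ℝ) : Prop :=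
  ∀ x, IsGreatest {r : ℝ | ∃ y, p y ≤ 1 ∧ r = x ⬝ᵥ y} (q x)

variable {p : Seminorm ℝ (ι → ℝ)} {q : (ι → ℝ) → ℝ}

theorem dual_nonneg (hpq : IsDualNorm p q) (x : ι → ℝ) : 0 ≤ q x :=
  (hpq x).2 ⟨0, by simp, by simp⟩

theorem dotProduct_le_dual_mul (hpq : IsDualNorm p q) (x y : ι → ℝ) : x ⬝ᵥ y ≤ q x * p y := by
  have hscale : ∀ r > 0, p y ≤ r → x ⬝ᵥ y ≤ q x * r := fun r hr hyr => by
    rw [← div_le_iff₀ hr]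
    refine (hpq x).2 ⟨r⁻¹ • y, ?_, by simp [div_eq_inv_mul]⟩
    rw [map_smul_eq_mul, norm_inv, Real.norm_of_nonneg hr.le]
    exact inv_mul_le_one_of_le₀ hyr hr.le
  have hlim : Tendsto (fun r => q x * r) (𝓝[>] p y) (𝓝 (q x * p y)) :=
    (continuous_const_mul (q x)).continuousWithinAt
  refine ge_of_tendsto hlim ?_
  filter_upwards [self_mem_nhdsWithin] with r hr
  exact hscale r ((apply_nonneg p y).trans_lt hr) (le_of_lt hr)

theorem isPermInvariant_dual (hp : IsPermInvariant p) (hpq : IsDualNorm p q) :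
    IsPermInvariant q := by
  have hle : ∀ (σ : Equiv.Perm ι) (x : ι → ℝ), q (x ∘ σ) ≤ q x := fun σ x => by
    obtain ⟨y, hy, hxy⟩ := (hpq (x ∘ σ)).1
    rw [hxy, ← dotProduct_comp_equiv_symm]
    exact (hpq x).2 ⟨y ∘ σ.symm, (hp _ _).trans_le hy, rfl⟩
  intro σ x
  refine (hle σ x).antisymm ?_
  simpa [Function.comp_assoc] using hle σ.symm (x ∘ σ)

theorem isCompact_seminorm_le (hpq : IsDualNorm p q) (R : ℝ) : IsCompact {x | p x ≤ R} := by
  refine (isCompact_Icc (a := fun i => -(q (Pi.single i (-1)) * R))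
    (b := fun i => q (Pi.single i 1) * R)).of_isClosed_subset
    (isClosed_le (continuous_seminorm p) continuous_const) fun x hx => ⟨fun i => ?_, fun i => ?_⟩
  · have h := dotProduct_le_dual_mul hpq (Pi.single i (-1)) x
    have hR := mul_le_mul_of_nonneg_left hx (dual_nonneg hpq (Pi.single i (-1)))
    rw [single_dotProduct] at h
    linarith
  · have h := dotProduct_le_dual_mul hpq (Pi.single i 1) x
    have hR := mul_le_mul_of_nonneg_left hx (dual_nonneg hpq (Pi.single i 1))
    rw [single_dotProduct] at h
    linarith

theorem compactSpace_unitaryGroup [DecidableEq ι] : CompactSpace (unitaryGroup ι ℂ) := by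
  refine isCompact_iff_compactSpace.1 <|
    (isCompact_univ_pi fun _ => isCompact_univ_pi fun _ =>
      isCompact_closedBall (0 : ℂ) 1).of_isClosed_subset
      (isClosed_unitary (R := Matrix ι ι ℂ)) ?_
  intro U hU i _ j _
  simpa using entry_norm_bound_of_unitary hU i j

end Duality

section TraceDuality

variable {n : ℕ} {p : Seminorm ℝ (Fin n → ℝ)} {q : (Fin n → ℝ) → ℝ}

theorem re_trace_unitaryDiagonal_mul (U W : unitaryGroup (Fin n) ℂ) (a b : Fin n → ℝ) :
    (trace (unitaryDiagonal U a * unitaryDiagonal W b)).re =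
      a ⬝ᵥ ((of fun i j =>
        ‖((star U * W : unitaryGroup (Fin n) ℂ) : Matrix _ _ ℂ) i j‖ ^ 2) *ᵥ b) := by
  set V := star U * W
  have hconj : trace (unitaryDiagonal U a * unitaryDiagonal W b) =
      trace (diagonal (fun i => (a i : ℂ)) * unitaryDiagonal V b) := by
    rw [unitaryDiagonal_apply U, mul_assoc, mul_assoc, trace_mul_comm]
    simp only [unitaryDiagonal_apply, V, UnitaryGroup.mul_val, mul_assoc,
      conjTranspose_mul, conjTranspose_conjTranspose, star_eq_conjTranspose, Unitary.coe_star]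
  rw [hconj, trace, Complex.re_sum]
  refine Finset.sum_congr rfl fun i _ => ?_
  rw [diag_apply, diagonal_mul, Complex.re_ofReal_mul, unitaryDiagonal_apply, mul_apply,
    Complex.re_sum]
  congr 1
  refine Finset.sum_congr rfl fun j _ => ?_
  rw [mul_diagonal, conjTranspose_apply, RCLike.star_def, mul_right_comm, Complex.mul_conj',
    ← Complex.ofReal_pow, ← Complex.ofReal_mul, Complex.ofReal_re]
  rfl

theorem re_trace_mul_le (hp : IsPermInvariant p) (hpq : IsDualNorm p q)
    {G S : Matrix (Fin n) (Fin n) ℂ} (hG : G.IsHermitian) (hS : S.IsHermitian) :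
    (trace (G * S)).re ≤ vnorm q G * vnorm p S := by
  obtain ⟨U, a, -, rfl⟩ := exists_eq_unitaryDiagonal_antitone hG
  obtain ⟨W, b, -, rfl⟩ := exists_eq_unitaryDiagonal_antitone hS
  rw [re_trace_unitaryDiagonal_mul, vnorm_unitaryDiagonal hp,
    vnorm_unitaryDiagonal (isPermInvariant_dual hp hpq)]
  refine (dotProduct_le_dual_mul hpq _ _).trans ?_
  exact mul_le_mul_of_nonneg_left (seminorm_mulVec_le_of_mem_doublyStochastic hp
    (of_norm_sq_mem_doublyStochastic _) b) (dual_nonneg hpq a)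

theorem exists_re_trace_mul_eq (hp : IsPermInvariant p) (hpq : IsDualNorm p q)
    {G : Matrix (Fin n) (Fin n) ℂ} (hG : G.IsHermitian) :
    ∃ S : Matrix (Fin n) (Fin n) ℂ, S.IsHermitian ∧ vnorm p S ≤ 1 ∧
      (trace (G * S)).re = vnorm q G := by
  obtain ⟨U, a, -, rfl⟩ := exists_eq_unitaryDiagonal_antitone hG
  obtain ⟨b, hb, hab⟩ := (hpq a).1
  refine ⟨unitaryDiagonal U b, isHermitian_unitaryDiagonal U b, ?_, ?_⟩
  · rwa [vnorm_unitaryDiagonal hp]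
  · rw [vnorm_unitaryDiagonal (isPermInvariant_dual hp hpq), hab, ← map_mul,
      unitaryDiagonal_apply, trace_mul_comm, ← mul_assoc, ← star_eq_conjTranspose,
      UnitaryGroup.star_mul_self, one_mul, trace_diagonal]
    simp [dotProduct]

end TraceDuality

section GeodesicConvexity

variable {n : ℕ} {f : Matrix (Fin n) (Fin n) ℂ → ℝ}
  {G : Matrix (Fin n) (Fin n) ℂ → Matrix (Fin n) (Fin n) ℂ} {A S : Matrix (Fin n) (Fin n) ℂ}

/-- `f` is convex along the geodesics `t ↦ X^{1/2} e^{tS} X^{1/2}` of the cone of positive definite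
matrices. -/
def GeodesicallyConvex (f : Matrix (Fin n) (Fin n) ℂ → ℝ) : Prop :=
  ∀ X : Matrix (Fin n) (Fin n) ℂ, X.PosDef → ∀ S : Matrix (Fin n) (Fin n) ℂ, S.IsHermitian →
    ConvexOn ℝ Set.univ fun t : ℝ => f (matSqrt X * NormedSpace.exp (t • S) * matSqrt X)

/-- `G X` is the Hermitian matrix representing, via the trace pairing, the derivatives of `f` at the
positive definite matrix `X` in all Hermitian directions. -/
structure IsTraceGradient (f : Matrix (Fin n) (Fin n) ℂ → ℝ)
    (G : Matrix (Fin n) (Fin n) ℂ → Matrix (Fin n) (Fin n) ℂ) : Prop where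
  isHermitian : ∀ X, X.PosDef → (G X).IsHermitian
  hasDerivAt : ∀ X, X.PosDef → ∀ H : Matrix (Fin n) (Fin n) ℂ, H.IsHermitian →
    HasDerivAt (fun t : ℝ => f (X + t • H)) (trace (G X * H)).re 0

theorem posDef_mul_conjTranspose_of_isUnit (hA : IsUnit A) : (A * Aᴴ).PosDef := by
  simpa [star_eq_conjTranspose] using hA.posDef_star_right_conjugate_iff.2 PosDef.one

theorem exists_eq_matSqrt_mul_unitary (hA : IsUnit A) :
    ∃ V : unitaryGroup (Fin n) ℂ, A = matSqrt (A * Aᴴ) * V := by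
  have hX := posDef_mul_conjTranspose_of_isUnit hA
  set P := matSqrt (A * Aᴴ)
  have hPP : P * P = A * Aᴴ := matSqrt_mul_self hX.posSemidef
  have hPh : Pᴴ = P := (posDef_matSqrt hX).isHermitian
  have hP : IsUnit P.det := (isUnit_iff_isUnit_det P).1 (posDef_matSqrt hX).isUnit
  refine ⟨⟨P⁻¹ * A, mem_unitaryGroup_iff.2 ?_⟩, (mul_nonsing_inv_cancel_left P A hP).symm⟩
  rw [star_eq_conjTranspose, conjTranspose_mul, conjTranspose_nonsing_inv, hPh, mul_assoc,
    ← mul_assoc A, ← hPP, mul_assoc P, mul_nonsing_inv P hP, mul_one, nonsing_inv_mul P hP]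

namespace GeodesicallyConvex

theorem convexOn_congruence (hf : GeodesicallyConvex f) (hA : IsUnit A) (hS : S.IsHermitian) :
    ConvexOn ℝ Set.univ fun t : ℝ => f (A * NormedSpace.exp (t • S) * Aᴴ) := by
  obtain ⟨V, hV⟩ := exists_eq_matSqrt_mul_unitary hA
  have hX := posDef_mul_conjTranspose_of_isUnit hA
  have hinv : (V : Matrix (Fin n) (Fin n) ℂ)⁻¹ = (V : Matrix (Fin n) (Fin n) ℂ)ᴴ :=
    inv_eq_left_inv (UnitaryGroup.star_mul_self V)
  convert hf _ hX _ (isHermitian_mul_mul_conjTranspose (V : Matrix (Fin n) (Fin n) ℂ) hS) using 3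
    with t
  rw [← smul_mul_assoc, ← mul_smul_comm, ← hinv, Matrix.exp_conj _ _ Unitary.isUnit_coe, hinv]
  conv_lhs => rw [hV, conjTranspose_mul, (posDef_matSqrt hX).isHermitian.eq]
  simp only [mul_assoc]

theorem convexOn_exp_smul (hf : GeodesicallyConvex f) (hS : S.IsHermitian) :
    ConvexOn ℝ Set.univ fun t : ℝ => f (NormedSpace.exp (t • S)) := by
  simpa using hf.convexOn_congruence isUnit_one hS

/-- `{A e^{U diag(x) Uᴴ} Aᴴ | x ∈ ℝⁿ}` is a flat: any two of its points lie on a geodesic whose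
parametrization is affine in `x`. -/
theorem convexOn_flat (hf : GeodesicallyConvex f) (hA : IsUnit A) (U : unitaryGroup (Fin n) ℂ) :
    ConvexOn ℝ Set.univ fun x : Fin n → ℝ =>
      f (A * NormedSpace.exp (unitaryDiagonal U x) * Aᴴ) := by
  refine ⟨convex_univ, fun x _ y _ a b ha hb hab => ?_⟩
  set D := NormedSpace.exp (unitaryDiagonal U ((1 / 2 : ℝ) • x))
  have hD : D.PosDef := posDef_exp_unitaryDiagonal U _
  have hgeo : ∀ t : ℝ, A * D * NormedSpace.exp (t • unitaryDiagonal U (y - x)) * (A * D)ᴴ =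
      A * NormedSpace.exp (unitaryDiagonal U (x + t • (y - x))) * Aᴴ := fun t => by
    have hsplit : NormedSpace.exp (unitaryDiagonal U (x + t • (y - x))) =
        D * NormedSpace.exp (t • unitaryDiagonal U (y - x)) * D := by
      simp only [D, ← map_smul, exp_unitaryDiagonal, ← map_mul]
      congr 1
      funext i
      simp only [Pi.mul_apply, ← Real.exp_add]
      congr 1
      simp only [Pi.add_apply, Pi.smul_apply, Pi.sub_apply, smul_eq_mul]
      ring
    rw [hsplit, conjTranspose_mul, hD.isHermitian.eq]
    simp only [mul_assoc]
  have hconv := (hf.convexOn_congruence (hA.mul hD.isUnit)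
    (isHermitian_unitaryDiagonal U (y - x))).2 (Set.mem_univ 0) (Set.mem_univ 1) ha hb hab
  simp only [hgeo, smul_eq_mul, mul_zero, mul_one, zero_add] at hconv
  rwa [show x + b • (y - x) = a • x + b • y by rw [eq_sub_of_add_eq hab]; module,
    zero_smul, add_zero, one_smul, add_sub_cancel] at hconv

end GeodesicallyConvex

theorem hasDerivAt_comp_of_lipschitzOnWith {E F : Type*} [NormedAddCommGroup E] [NormedSpace ℝ E]
    [NormedAddCommGroup F] [NormedSpace ℝ F] {h : E → F} {K : NNReal} {T : Set E}
    (hh : LipschitzOnWith K h T) {c₁ c₂ : ℝ → E} {x : ℝ} {z : E} {d : F} (hT : T ∈ 𝓝 (c₁ x))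
    (hx : c₁ x = c₂ x) (hc₁ : HasDerivAt c₁ z x) (hc₂ : HasDerivAt c₂ z x)
    (hd : HasDerivAt (h ∘ c₁) d x) : HasDerivAt (h ∘ c₂) d x := by
  have hdiff : HasDerivAt (h ∘ c₂ - h ∘ c₁) 0 x := by
    have hc := hc₂.sub hc₁
    rw [sub_self, hasDerivAt_iff_isLittleO] at hc
    rw [hasDerivAt_iff_isLittleO]
    refine (Asymptotics.IsBigO.of_bound K ?_).trans_isLittleO hc
    filter_upwards [hc₁.continuousAt.eventually hT, hc₂.continuousAt.eventually (hx ▸ hT)]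
      with s hs₁ hs₂
    simpa [hx, dist_eq_norm] using hh.dist_le_mul _ hs₂ _ hs₁
  simpa using hdiff.add hd

/-- In the coordinates `x` of the flat through `S`, the segment `A Aᴴ + t A S Aᴴ` and the geodesic
`A e^{tS} Aᴴ` are curves with the same initial velocity, and `f` is locally Lipschitz there. -/
theorem hasDerivAt_geodesic (hf : GeodesicallyConvex f) (hG : IsTraceGradient f G)
    (hA : IsUnit A) (hS : S.IsHermitian) :
    HasDerivAt (fun t : ℝ => f (A * NormedSpace.exp (t • S) * Aᴴ))
      (trace (Aᴴ * G (A * Aᴴ) * A * S)).re 0 := by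
  obtain ⟨U, z, -, rfl⟩ := exists_eq_unitaryDiagonal_antitone hS
  obtain ⟨K, T, hT, hLip⟩ := (hf.convexOn_flat hA U).locallyLipschitzOn isOpen_univ
    (Set.mem_univ (0 : Fin n → ℝ))
  rw [nhdsWithin_univ] at hT
  have hline : HasDerivAt (fun s : ℝ => s • z) z 0 := by
    simpa using (hasDerivAt_id (0 : ℝ)).smul_const z
  have hlog : HasDerivAt (fun (s : ℝ) i => Real.log (1 + s * z i)) z 0 := by
    refine hasDerivAt_pi.2 fun i => ?_
    simpa using (((hasDerivAt_id (0 : ℝ)).mul_const (z i)).const_add 1).log (by simp)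
  have hpos : ∀ᶠ s : ℝ in 𝓝 0, ∀ i, 0 < 1 + s * z i := Filter.eventually_all.2 fun i => by
    have hcont : Continuous fun s : ℝ => 1 + s * z i := by fun_prop
    exact hcont.continuousAt.eventually (lt_mem_nhds (by simp))
  have hsegment : HasDerivAt
      ((fun x => f (A * NormedSpace.exp (unitaryDiagonal U x) * Aᴴ)) ∘
        fun (s : ℝ) i => Real.log (1 + s * z i))
      (trace (Aᴴ * G (A * Aᴴ) * A * unitaryDiagonal U z)).re 0 := by
    have hd := hG.hasDerivAt _ (posDef_mul_conjTranspose_of_isUnit hA) _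
      (isHermitian_mul_mul_conjTranspose A hS)
    rw [show trace (G (A * Aᴴ) * (A * unitaryDiagonal U z * Aᴴ)) =
      trace (Aᴴ * G (A * Aᴴ) * A * unitaryDiagonal U z) by
        rw [← mul_assoc, trace_mul_comm]; simp only [mul_assoc]] at hd
    refine hd.congr_of_eventuallyEq ?_
    filter_upwards [hpos] with s hs
    have hexp : (fun i => Real.exp (Real.log (1 + s * z i))) = 1 + s • z :=
      funext fun i => Real.exp_log (hs i)
    simp [exp_unitaryDiagonal, hexp, mul_add, add_mul]
  have hgeo := hasDerivAt_comp_of_lipschitzOnWith hLip (by simpa [← Pi.zero_def] using hT)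
    (by simp [funext_iff]) hlog hline hsegment
  simpa [Function.comp_def, map_smul] using hgeo

theorem add_re_trace_le_of_geodesicallyConvex (hf : GeodesicallyConvex f) (hG : IsTraceGradient f G)
    (hA : IsUnit A) (hS : S.IsHermitian) :
    f (A * Aᴴ) + (trace (Aᴴ * G (A * Aᴴ) * A * S)).re ≤ f (A * NormedSpace.exp S * Aᴴ) := by
  have h := (hf.convexOn_congruence hA hS).le_slope_of_hasDerivAt (Set.mem_univ 0)
    (Set.mem_univ 1) zero_lt_one (hasDerivAt_geodesic hf hG hA hS)
  simp only [slope_def_field, zero_smul, one_smul, NormedSpace.exp_zero, mul_one, sub_zero,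
    div_one] at h
  linarith

end GeodesicConvexity

section Semicontinuity

open scoped Matrix.Norms.L2Operator MatrixOrder

variable {n : ℕ} {f : Matrix (Fin n) (Fin n) ℂ → ℝ}
  {G : Matrix (Fin n) (Fin n) ℂ → Matrix (Fin n) (Fin n) ℂ}

/-- The subgradient inequality at `X` bounds `f` below by a continuous function of `Y` that agrees
with `f` at `Y = X`. -/
theorem lowerSemicontinuousOn_posDef (hf : GeodesicallyConvex f) (hG : IsTraceGradient f G) :
    LowerSemicontinuousOn f {X | X.PosDef} := by
  intro X hX
  set A := matSqrt X
  have hA : A.PosDef := posDef_matSqrt hX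
  have hAh : Aᴴ = A := hA.isHermitian
  have hdet : IsUnit A.det := (isUnit_iff_isUnit_det A).1 hA.isUnit
  have hAA : A * A = X := matSqrt_mul_self hX.posSemidef
  let L : Matrix (Fin n) (Fin n) ℂ → Matrix (Fin n) (Fin n) ℂ := fun Y => CFC.log (A⁻¹ * Y * A⁻¹)
  have hcong : ∀ Y : Matrix (Fin n) (Fin n) ℂ, Y.PosDef → (A⁻¹ * Y * A⁻¹).PosDef := fun Y hY => by
    simpa [star_eq_conjTranspose, conjTranspose_nonsing_inv, hAh] using
      hA.inv.isUnit.posDef_star_right_conjugate_iff.2 hY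
  have hL : ContinuousOn L {Y | Y.PosDef} := CFC.continuousOn_log.comp (by fun_prop) fun Y hY =>
    ⟨(hcong Y hY).isHermitian, (hcong Y hY).isUnit⟩
  have hminorant : ∀ Y : Matrix (Fin n) (Fin n) ℂ, Y.PosDef →
      f X + (trace (A * G X * A * L Y)).re ≤ f Y := fun Y hY => by
    have h := add_re_trace_le_of_geodesicallyConvex hf hG hA.isUnit (S := L Y) IsSelfAdjoint.log
    rw [hAh, hAA, CFC.exp_log _ (hcong Y hY).isStrictlyPositive] at h
    rwa [mul_assoc A⁻¹, mul_nonsing_inv_cancel_left A _ hdet,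
      nonsing_inv_mul_cancel_right A _ hdet] at h
  intro y hy
  have hcont : ContinuousWithinAt (fun Y => f X + (trace (A * G X * A * L Y)).re)
      {Y | Y.PosDef} X := by
    have := hL X hX
    fun_prop
  have hLX : L X = 0 := by
    simp only [L, ← hAA]
    rw [nonsing_inv_mul_cancel_left A _ hdet, mul_nonsing_inv A hdet, CFC.log_one]
  filter_upwards [hcont.eventually (lt_mem_nhds (by simpa [hLX] using hy)), self_mem_nhdsWithin]
    with Y hlt hY
  exact hlt.trans_le (hminorant Y hY)

end Semicontinuity

section Descent

variable {n : ℕ} {p : Seminorm ℝ (Fin n → ℝ)} {q : (Fin n → ℝ) → ℝ}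
  {f : Matrix (Fin n) (Fin n) ℂ → ℝ} {G : Matrix (Fin n) (Fin n) ℂ → Matrix (Fin n) (Fin n) ℂ}
  {A : Matrix (Fin n) (Fin n) ℂ} {m R : ℝ}

theorem lowerSemicontinuous_exp_unitaryDiagonal (hf : GeodesicallyConvex f)
    (hG : IsTraceGradient f G) :
    LowerSemicontinuous fun z : unitaryGroup (Fin n) ℂ × (Fin n → ℝ) =>
      f (NormedSpace.exp (unitaryDiagonal z.1 z.2)) := by
  have hcont : Continuous fun z : unitaryGroup (Fin n) ℂ × (Fin n → ℝ) =>
      NormedSpace.exp (unitaryDiagonal z.1 z.2) := by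
    simp only [exp_unitaryDiagonal]
    simp only [unitaryDiagonal_apply]
    fun_prop
  exact lowerSemicontinuousOn_univ_iff.1 <| (lowerSemicontinuousOn_posDef hf hG).comp
    hcont.continuousOn fun z _ => posDef_exp_unitaryDiagonal z.1 z.2

theorem exists_minimizer_apply_exp_add_mul_vnorm (hp : IsPermInvariant p) (hpq : IsDualNorm p q)
    (hf : GeodesicallyConvex f) (hG : IsTraceGradient f G) (m : ℝ) (hR : 0 ≤ R) :
    ∃ K : Matrix (Fin n) (Fin n) ℂ, K.IsHermitian ∧ vnorm p K ≤ R ∧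
      ∀ L : Matrix (Fin n) (Fin n) ℂ, L.IsHermitian → vnorm p L ≤ R →
        f (NormedSpace.exp K) + m * vnorm p K ≤ f (NormedSpace.exp L) + m * vnorm p L := by
  have := compactSpace_unitaryGroup (ι := Fin n)
  have hcont : Continuous fun z : unitaryGroup (Fin n) ℂ × (Fin n → ℝ) => m * p z.2 :=
    continuous_const.mul ((continuous_seminorm p).comp continuous_snd)
  have hlsc := (lowerSemicontinuous_exp_unitaryDiagonal hf hG).add hcont.lowerSemicontinuous
  obtain ⟨⟨U, k⟩, hk, hmin⟩ := (hlsc.lowerSemicontinuousOn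
    (Set.univ ×ˢ {h | p h ≤ R})).exists_isMinOn ⟨(1, 0), by simpa using hR⟩
    (isCompact_univ.prod (isCompact_seminorm_le hpq R))
  refine ⟨unitaryDiagonal U k, isHermitian_unitaryDiagonal U k, ?_, fun L hL hLR => ?_⟩
  · simpa [vnorm_unitaryDiagonal hp] using hk
  · obtain ⟨W, l, -, rfl⟩ := exists_eq_unitaryDiagonal_antitone hL
    rw [vnorm_unitaryDiagonal hp] at hLR
    simpa [vnorm_unitaryDiagonal hp] using hmin (show (W, l) ∈ _ from ⟨Set.mem_univ _, hLR⟩)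

theorem vnorm_gradient_le_of_forall_eventually_le (hp : IsPermInvariant p) (hpq : IsDualNorm p q)
    (hf : GeodesicallyConvex f) (hG : IsTraceGradient f G) (hA : IsUnit A)
    (hmin : ∀ S : Matrix (Fin n) (Fin n) ℂ, S.IsHermitian → vnorm p S ≤ 1 →
      ∀ᶠ s : ℝ in 𝓝[>] 0, f (A * Aᴴ) ≤ f (A * NormedSpace.exp (s • S) * Aᴴ) + m * s) :
    vnorm q (Aᴴ * G (A * Aᴴ) * A) ≤ m := by
  obtain ⟨S, hS, hS1, hSq⟩ := exists_re_trace_mul_eq hp hpq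
    (isHermitian_conjTranspose_mul_mul A
      (hG.isHermitian _ (posDef_mul_conjTranspose_of_isUnit hA)))
  have hnegS : vnorm p (-S) ≤ 1 := by simpa using (vnorm_smul hp hS (-1)).trans_le (by simpa)
  have hderiv := hasDerivAt_geodesic hf hG hA hS.neg
  rw [mul_neg, trace_neg, Complex.neg_re, hSq] at hderiv
  have hslope : ∀ᶠ s : ℝ in 𝓝[>] 0,
      -m ≤ s⁻¹ • (f (A * NormedSpace.exp ((0 + s) • -S) * Aᴴ) -
        f (A * NormedSpace.exp ((0 : ℝ) • -S) * Aᴴ)) := by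
    filter_upwards [hmin _ hS.neg hnegS, self_mem_nhdsWithin] with s hs hs0
    rw [zero_add, zero_smul, NormedSpace.exp_zero, mul_one, smul_eq_mul,
      le_inv_mul_iff₀ hs0]
    linarith
  exact neg_le_neg_iff.1 (ge_of_tendsto hderiv.tendsto_slope_zero_right hslope)

/-- A minimizer of `f (e^K) + m ‖K‖` on the ball of radius `R` lies on its boundary: at an interior
minimizer the gradient norm would be at most `m`, because `‖K‖` grows at rate at most one along
unit-speed geodesics. -/
theorem exists_vnorm_eq_apply_exp_le (hp : IsPermInvariant p) (hpq : IsDualNorm p q)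
    (hf : GeodesicallyConvex f) (hG : IsTraceGradient f G) (hm : 0 ≤ m) (hR : 0 ≤ R)
    (hgrad : ∀ X : Matrix (Fin n) (Fin n) ℂ, X.PosDef →
      m < vnorm q (matSqrt X * G X * matSqrt X)) :
    ∃ K : Matrix (Fin n) (Fin n) ℂ, K.IsHermitian ∧ vnorm p K = R ∧
      f (NormedSpace.exp K) ≤ f 1 - m * R := by
  obtain ⟨K, hK, hKR, hmin⟩ := exists_minimizer_apply_exp_add_mul_vnorm hp hpq hf hG m hR
  have hX := posDef_exp hK
  set A := matSqrt (NormedSpace.exp K)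
  have hA : A.PosDef := posDef_matSqrt hX
  have hAh : Aᴴ = A := hA.isHermitian
  have hAA : A * A = NormedSpace.exp K := matSqrt_mul_self hX.posSemidef
  obtain hlt | rfl := hKR.lt_or_eq
  · refine absurd (hgrad _ hX) (not_lt.2 ?_)
    have hle := vnorm_gradient_le_of_forall_eventually_le (m := m) hp hpq hf hG hA.isUnit
      fun S hS hS1 => ?_
    · rwa [hAh, hAA] at hle
    filter_upwards [Ioo_mem_nhdsGT (sub_pos.2 hlt)] with s hs
    have hsS : (s • S).IsHermitian := hS.smul (IsSelfAdjoint.all s)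
    have hY : (A * NormedSpace.exp (s • S) * Aᴴ).PosDef :=
      hA.isUnit.posDef_star_right_conjugate_iff.2 (posDef_exp hsS)
    obtain ⟨V, l, -, hl⟩ := exists_eq_exp_unitaryDiagonal_antitone hY
    set L := unitaryDiagonal V l
    have hL : L.IsHermitian := isHermitian_unitaryDiagonal V l
    have hnorm : vnorm p L ≤ vnorm p K + s := by
      refine (vnorm_le_add_of_congruence hp hK hsS hL (by rw [hAh, hAA]) hl).trans ?_
      rw [vnorm_smul hp hS, abs_of_pos hs.1]
      nlinarith [hs.1]
    have hKL := hmin L hL (by linarith [hs.2])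
    rw [hAh] at hl ⊢
    rw [hAA, hl]
    nlinarith
  · refine ⟨K, hK, rfl, ?_⟩
    have h0 := hmin 0 isHermitian_zero (by simpa [vnorm_zero hp] using hR)
    rw [NormedSpace.exp_zero, vnorm_zero hp, mul_zero, add_zero] at h0
    linarith

theorem exists_vnorm_le_apply_exp_le (hp : IsPermInvariant p) (hpq : IsDualNorm p q)
    (hf : GeodesicallyConvex f) (hG : IsTraceGradient f G) (hm : 0 ≤ m) (hR : 0 ≤ R)
    (hgrad : ∀ X : Matrix (Fin n) (Fin n) ℂ, X.PosDef →
      m ≤ vnorm q (matSqrt X * G X * matSqrt X)) :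
    ∃ K : Matrix (Fin n) (Fin n) ℂ, K.IsHermitian ∧ vnorm p K ≤ R ∧
      f (NormedSpace.exp K) ≤ f 1 - m * R := by
  obtain rfl | hm := hm.eq_or_lt
  · exact ⟨0, isHermitian_zero, by simpa [vnorm_zero hp] using hR, by simp⟩
  obtain ⟨K, hK, hKR, hmin⟩ := exists_minimizer_apply_exp_add_mul_vnorm hp hpq hf hG 0 hR
  refine ⟨K, hK, hKR, ?_⟩
  have hlim : Tendsto (fun c => f 1 - c * R) (𝓝[<] m) (𝓝 (f 1 - m * R)) :=
    (Continuous.tendsto (by fun_prop) m).mono_left nhdsWithin_le_nhds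
  refine ge_of_tendsto hlim ?_
  filter_upwards [Ioo_mem_nhdsLT hm] with c hc
  obtain ⟨L, hL, hLR, hfL⟩ := exists_vnorm_eq_apply_exp_le hp hpq hf hG hc.1.le hR
    fun X hX => hc.2.trans_le (hgrad X hX)
  exact le_trans (by simpa using hmin L hL hLR.le) hfL

end Descent

section Recession

theorem exists_tendsto_slope_of_convexOn {g : ℝ → ℝ} {c : ℝ} (hg : ConvexOn ℝ Set.univ g)
    (hc : ∀ t > 0, (g t - g 0) / t ≤ c) :
    ∃ l ≤ c, Tendsto (fun t => (g t - g 0) / t) atTop (𝓝 l) := by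
  have hpos : ∀ t : ℝ, 0 < max t 1 := fun t => zero_lt_one.trans_le (le_max_right t 1)
  have hmono : Monotone fun t => (g (max t 1) - g 0) / max t 1 := fun s t hst => by
    simpa using hg.secant_mono (Set.mem_univ 0) (Set.mem_univ _) (Set.mem_univ _) (hpos s).ne'
      (hpos t).ne' (max_le_max_right 1 hst)
  refine ⟨⨆ t, (g (max t 1) - g 0) / max t 1, ciSup_le fun t => hc _ (hpos t), ?_⟩
  refine (tendsto_atTop_ciSup hmono ⟨c, Set.forall_mem_range.2 fun t => hc _ (hpos t)⟩).congr' ?_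
  filter_upwards [eventually_ge_atTop 1] with t ht
  rw [max_eq_left ht]

variable {n : ℕ} {p : Seminorm ℝ (Fin n → ℝ)} {q : (Fin n → ℝ) → ℝ}
  {f : Matrix (Fin n) (Fin n) ℂ → ℝ} {G : Matrix (Fin n) (Fin n) ℂ → Matrix (Fin n) (Fin n) ℂ}
  {H X : Matrix (Fin n) (Fin n) ℂ} {m r : ℝ}

theorem vnorm_dual_nonneg (hpq : IsDualNorm p q) (H : Matrix (Fin n) (Fin n) ℂ) :
    0 ≤ vnorm q H := by
  rw [vnorm]
  split_ifs
  exacts [dual_nonneg hpq _, le_rfl]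

theorem apply_exp_smul_le_of_le (hf : GeodesicallyConvex f) (hH : H.IsHermitian) {s t : ℝ}
    (hs : 0 < s) (hst : s ≤ t) (ht : f (NormedSpace.exp (t • H)) ≤ f 1 - m * t) :
    f (NormedSpace.exp (s • H)) ≤ f 1 - m * s := by
  have hslope := (hf.convexOn_exp_smul hH).secant_mono (Set.mem_univ 0) (Set.mem_univ s)
    (Set.mem_univ t) hs.ne' (hs.trans_le hst).ne' hst
  simp only [zero_smul, NormedSpace.exp_zero, sub_zero] at hslope
  have ht' : (f (NormedSpace.exp (t • H)) - f 1) / t ≤ -m := by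
    rw [div_le_iff₀ (hs.trans_le hst)]
    linarith
  have hs' := (div_le_iff₀ hs).1 (hslope.trans ht')
  linarith

theorem isClosed_setOf_apply_exp_smul_le (hf : GeodesicallyConvex f) (hG : IsTraceGradient f G)
    (t c : ℝ) :
    IsClosed {z : unitaryGroup (Fin n) ℂ × (Fin n → ℝ) |
      f (NormedSpace.exp (t • unitaryDiagonal z.1 z.2)) ≤ c} := by
  have hscale : Continuous fun z : unitaryGroup (Fin n) ℂ × (Fin n → ℝ) => (z.1, t • z.2) := by
    fun_prop
  simpa [Set.preimage, map_smul] using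
    ((lowerSemicontinuous_exp_unitaryDiagonal hf hG).comp hscale).isClosed_preimage c

/-- The unit directions along which `f` has descended by `m t` at time `t` form a nonempty compact
set; by convexity these sets decrease in `t`, so some direction lies in all of them. -/
theorem exists_forall_apply_exp_smul_le (hp : IsPermInvariant p) (hpq : IsDualNorm p q)
    (hf : GeodesicallyConvex f) (hG : IsTraceGradient f G) (hm : 0 ≤ m)
    (hgrad : ∀ X : Matrix (Fin n) (Fin n) ℂ, X.PosDef →
      m ≤ vnorm q (matSqrt X * G X * matSqrt X)) :
    ∃ H : Matrix (Fin n) (Fin n) ℂ, H.IsHermitian ∧ vnorm p H ≤ 1 ∧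
      ∀ t > 0, f (NormedSpace.exp (t • H)) ≤ f 1 - m * t := by
  have := compactSpace_unitaryGroup (ι := Fin n)
  let D : Set.Ioi (0 : ℝ) → Set (unitaryGroup (Fin n) ℂ × (Fin n → ℝ)) := fun t =>
    {z | f (NormedSpace.exp (t.1 • unitaryDiagonal z.1 z.2)) ≤ f 1 - m * t.1} ∩
      Set.univ ×ˢ {h | p h ≤ 1}
  have hanti : Antitone D := fun s t hst z hz =>
    ⟨apply_exp_smul_le_of_le hf (isHermitian_unitaryDiagonal _ _) s.2 hst hz.1, hz.2⟩
  have hne : ∀ t, (D t).Nonempty := fun ⟨t, ht⟩ => by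
    replace ht : 0 < t := ht
    obtain ⟨K, hK, hKt, hfK⟩ := exists_vnorm_le_apply_exp_le hp hpq hf hG hm ht.le hgrad
    obtain ⟨U, k, -, rfl⟩ := exists_eq_unitaryDiagonal_antitone hK
    rw [vnorm_unitaryDiagonal hp] at hKt
    refine ⟨(U, t⁻¹ • k), by simpa [map_smul, smul_inv_smul₀ ht.ne'] using hfK,
      Set.mem_univ _, ?_⟩
    simpa [map_smul_eq_mul, abs_of_pos ht] using inv_mul_le_one_of_le₀ hKt ht.le
  have hcompact := isCompact_univ (X := unitaryGroup (Fin n) ℂ).prod (isCompact_seminorm_le hpq 1)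
  obtain ⟨⟨U, h⟩, hUh⟩ := IsCompact.nonempty_iInter_of_directed_nonempty_isCompact_isClosed D
    hanti.directed_ge hne
    (fun t => hcompact.inter_left (isClosed_setOf_apply_exp_smul_le hf hG _ _))
    fun t => (isClosed_setOf_apply_exp_smul_le hf hG _ _).inter hcompact.isClosed
  rw [Set.mem_iInter] at hUh
  refine ⟨unitaryDiagonal U h, isHermitian_unitaryDiagonal U h, ?_, fun t ht => (hUh ⟨t, ht⟩).1⟩
  simpa [vnorm_unitaryDiagonal hp] using (hUh ⟨1, Set.mem_Ioi.2 one_pos⟩).2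

theorem sub_vnorm_gradient_mul_le_apply_geodesic (hp : IsPermInvariant p) (hpq : IsDualNorm p q)
    (hf : GeodesicallyConvex f) (hG : IsTraceGradient f G) (hX : X.PosDef) (hH : H.IsHermitian) :
    f X - vnorm q (matSqrt X * G X * matSqrt X) * vnorm p H ≤
      f (matSqrt X * NormedSpace.exp H * matSqrt X) := by
  have hA := posDef_matSqrt hX
  have hAh : (matSqrt X)ᴴ = matSqrt X := hA.isHermitian
  have hgrad : (matSqrt X * G X * matSqrt X).IsHermitian := by
    simpa [hAh] using isHermitian_conjTranspose_mul_mul (matSqrt X) (hG.isHermitian X hX)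
  have hsub := add_re_trace_le_of_geodesicallyConvex hf hG hA.isUnit hH
  rw [hAh, matSqrt_mul_self hX.posSemidef] at hsub
  have htrace := re_trace_mul_le hp hpq hgrad hH.neg
  rw [mul_neg, trace_neg, Complex.neg_re, ← neg_one_smul ℝ H, vnorm_smul hp hH, abs_neg, abs_one,
    one_mul] at htrace
  linarith

theorem exists_sub_vnorm_gradient_mul_le_apply_exp_smul (hp : IsPermInvariant p)
    (hpq : IsDualNorm p q) (hf : GeodesicallyConvex f) (hG : IsTraceGradient f G)
    (hX : X.PosDef) (hH : H.IsHermitian) :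
    ∃ C : ℝ, ∀ t ≥ 0, f X - vnorm q (matSqrt X * G X * matSqrt X) * (C + t * vnorm p H) ≤
      f (NormedSpace.exp (t • H)) := by
  set A := matSqrt X
  have hA : A.PosDef := posDef_matSqrt hX
  have hinv : A⁻¹ᴴ = A⁻¹ := hA.inv.isHermitian
  have hdet : IsUnit A.det := (isUnit_iff_isUnit_det A).1 hA.isUnit
  obtain ⟨U, k, -, hk⟩ := exists_eq_exp_unitaryDiagonal_antitone
    (posDef_mul_conjTranspose_of_isUnit hA.inv.isUnit)
  refine ⟨vnorm p (unitaryDiagonal U k), fun t ht => ?_⟩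
  have htH : (t • H).IsHermitian := hH.smul (IsSelfAdjoint.all t)
  obtain ⟨V, l, -, hl⟩ := exists_eq_exp_unitaryDiagonal_antitone
    (P := A⁻¹ * NormedSpace.exp (t • H) * A⁻¹ᴴ)
    (hA.inv.isUnit.posDef_star_right_conjugate_iff.2 (posDef_exp htH))
  have hL := isHermitian_unitaryDiagonal V l
  have hnorm := vnorm_le_add_of_congruence hp (isHermitian_unitaryDiagonal U k) htH hL hk hl
  rw [vnorm_smul hp hH, abs_of_nonneg ht] at hnorm
  have hsub := sub_vnorm_gradient_mul_le_apply_geodesic hp hpq hf hG hX hL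
  rw [← hl, hinv, mul_assoc A⁻¹, mul_nonsing_inv_cancel_left A _ hdet,
    nonsing_inv_mul_cancel_right A _ hdet] at hsub
  exact (sub_le_sub_left (mul_le_mul_of_nonneg_left hnorm (vnorm_dual_nonneg hpq _)) _).trans hsub

theorem le_vnorm_gradient_of_tendsto (hp : IsPermInvariant p) (hpq : IsDualNorm p q)
    (hf : GeodesicallyConvex f) (hG : IsTraceGradient f G) (hX : X.PosDef) (hH : H.IsHermitian)
    (hH1 : vnorm p H ≤ 1)
    (hr : Tendsto (fun t : ℝ => (f (NormedSpace.exp (t • H)) - f 1) / t) atTop (𝓝 (-r))) :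
    r ≤ vnorm q (matSqrt X * G X * matSqrt X) := by
  obtain ⟨C, hC⟩ := exists_sub_vnorm_gradient_mul_le_apply_exp_smul hp hpq hf hG hX hH
  have hN := vnorm_dual_nonneg hpq (matSqrt X * G X * matSqrt X)
  set N := vnorm q (matSqrt X * G X * matSqrt X)
  have hlim : Tendsto (fun t : ℝ => (f X - f 1 - N * C) / t - N) atTop (𝓝 (-N)) := by
    simpa using ((tendsto_const_nhds (x := f X - f 1 - N * C)).div_atTop tendsto_id).sub_const N
  refine neg_le_neg_iff.1 (le_of_tendsto_of_tendsto hlim hr ?_)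
  filter_upwards [eventually_gt_atTop 0] with t ht
  rw [div_sub' ht.ne']
  refine div_le_div_of_nonneg_right ?_ ht.le
  have hmul := mul_le_mul_of_nonneg_left (mul_le_of_le_one_right ht.le hH1) hN
  linarith [hC t ht.le]

theorem exists_tendsto_slope_of_forall_le_vnorm_gradient (hp : IsPermInvariant p)
    (hpq : IsDualNorm p q) (hf : GeodesicallyConvex f) (hG : IsTraceGradient f G) (hm : 0 ≤ m)
    (hgrad : ∀ X : Matrix (Fin n) (Fin n) ℂ, X.PosDef →
      m ≤ vnorm q (matSqrt X * G X * matSqrt X)) :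
    ∃ r ≥ m, ∃ H : Matrix (Fin n) (Fin n) ℂ, H.IsHermitian ∧ vnorm p H ≤ 1 ∧
      Tendsto (fun t : ℝ => (f (NormedSpace.exp (t • H)) - f 1) / t) atTop (𝓝 (-r)) := by
  obtain ⟨H, hH, hH1, hdescent⟩ := exists_forall_apply_exp_smul_le hp hpq hf hG hm hgrad
  obtain ⟨l, hl, hlim⟩ := exists_tendsto_slope_of_convexOn (c := -m) (hf.convexOn_exp_smul hH)
    fun t ht => by
      rw [zero_smul, NormedSpace.exp_zero, div_le_iff₀ ht]
      linarith [hdescent t ht]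
  exact ⟨-l, le_neg_of_le_neg hl, H, hH, hH1, by simpa using hlim⟩

end Recession

/-- Duality of the minimum dual gradient norm: `inf_X ‖X^{1/2} ∇f(X) X^{1/2}‖_{v*}` equals
`sup { -f^∞(H) : H Hermitian, ‖H‖_v ≤ 1 }`, where `f^∞(H) = lim_{t→∞} (f(e^{tH}) - f(I))/t`. -/
theorem duality_min_gradient_norm {n : ℕ} (v vs : (Fin n → ℝ) → ℝ)
    (hv_eq0 : ∀ x, v x = 0 ↔ x = 0)
    (hv_smul : ∀ (c : ℝ) (x : Fin n → ℝ), v (c • x) = |c| * v x)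
    (hv_add : ∀ x y, v (x + y) ≤ v x + v y)
    (hv_perm : ∀ (σ : Equiv.Perm (Fin n)) (x : Fin n → ℝ), v (x ∘ σ) = v x)
    (hvs : ∀ x, IsGreatest {r : ℝ | ∃ y : Fin n → ℝ, v y ≤ 1 ∧ r = ∑ i, x i * y i} (vs x))
    (f : Matrix (Fin n) (Fin n) ℂ → ℝ)
    (hconv : ∀ X : Matrix (Fin n) (Fin n) ℂ, X.PosDef →
      ∀ S : Matrix (Fin n) (Fin n) ℂ, S.IsHermitian →
        ConvexOn ℝ Set.univ (fun t : ℝ => f (matSqrt X * NormedSpace.exp (t • S) * matSqrt X)))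
    (Gf : Matrix (Fin n) (Fin n) ℂ → Matrix (Fin n) (Fin n) ℂ)
    (hGf_herm : ∀ X : Matrix (Fin n) (Fin n) ℂ, X.PosDef → (Gf X).IsHermitian)
    (hGf : ∀ X : Matrix (Fin n) (Fin n) ℂ, X.PosDef →
      ∀ H : Matrix (Fin n) (Fin n) ℂ, H.IsHermitian →
        HasDerivAt (fun t : ℝ => f (X + t • H)) ((Matrix.trace (Gf X * H)).re) 0) :
    sInf {r : ℝ | ∃ X : Matrix (Fin n) (Fin n) ℂ, X.PosDef ∧
        r = vnorm vs (matSqrt X * Gf X * matSqrt X)}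
      = sSup {r : ℝ | ∃ H : Matrix (Fin n) (Fin n) ℂ, H.IsHermitian ∧ vnorm v H ≤ 1 ∧
          Tendsto (fun t : ℝ => (f (NormedSpace.exp (t • H)) - f 1) / t) atTop (𝓝 (-r))} := by
  let p : Seminorm ℝ (Fin n → ℝ) := Seminorm.of v hv_add hv_smul
  have hp : IsPermInvariant p := hv_perm
  have hpq : IsDualNorm p vs := hvs
  have hf : GeodesicallyConvex f := hconv
  have hG : IsTraceGradient f Gf := ⟨hGf_herm, hGf⟩
  set gradNorms := {r : ℝ | ∃ X : Matrix (Fin n) (Fin n) ℂ, X.PosDef ∧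
    r = vnorm vs (matSqrt X * Gf X * matSqrt X)}
  have hne : gradNorms.Nonempty := ⟨_, 1, PosDef.one, rfl⟩
  have hnonneg : 0 ∈ lowerBounds gradNorms := by
    rintro _ ⟨X, -, rfl⟩
    exact vnorm_dual_nonneg hpq _
  obtain ⟨r, hr, H, hH, hH1, hlim⟩ := exists_tendsto_slope_of_forall_le_vnorm_gradient hp hpq hf hG
    (le_csInf hne hnonneg) fun X hX => csInf_le ⟨0, hnonneg⟩ ⟨X, hX, rfl⟩
  have hweak : ∀ s ∈ {r : ℝ | ∃ H : Matrix (Fin n) (Fin n) ℂ, H.IsHermitian ∧ vnorm v H ≤ 1 ∧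
      Tendsto (fun t : ℝ => (f (NormedSpace.exp (t • H)) - f 1) / t) atTop (𝓝 (-r))},
      s ≤ sInf gradNorms := by
    rintro s ⟨K, hK, hK1, hs⟩
    refine le_csInf hne ?_
    rintro _ ⟨X, hX, rfl⟩
    exact le_vnorm_gradient_of_tendsto hp hpq hf hG hX hK hK1 hs
  exact (hr.trans (le_csSup ⟨_, hweak⟩ ⟨H, hH, hH1, hlim⟩)).antisymm
    (csSup_le ⟨r, H, hH, hH1, hlim⟩ hweak)
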